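/- Let N ∈ ℕ and let (M,d) be a pointed metric space with base point 0 such that d takes only the values 0,1,…,N. Let (F_n)_{n=0}^∞ be pairwise disjoint finite subsets of M and let (γ_n)_{n=0}^∞ be functions γ_n : M → ℝ with support contained in F_n and with sup_n ‖γ_n‖ < ∞ (free norm). Assume that limsup_n ‖γ_0 + γ_n‖ > c for some c > 0. Then there exists a 3-Lipschitz function g : M → ℝ with g(0) = 0 such that limsup_n Σ_{x∈M} (γ_0 + γ_n)(x)·g(x) > c. -/

import Mathlib

open scoped BigOperators
open Filter

/-- The free norm of a finitely supported function `μ : M → ℝ` over a pointed metric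
space `(M, z)`. -/
noncomputable def freeNorm {M : Type*} [MetricSpace M] (z : M) (μ : M →₀ ℝ) : ℝ :=
  sSup {s | ∃ f : M → ℝ, f z = 0 ∧ LipschitzWith 1 f ∧ s = ∑ x ∈ μ.support, μ x * f x}

/-!
Choose for each `n` an almost norming function `q n` of the `n`-th measure `μ n = γ 0 + γ n`,
perturbed so that it is `r`-Lipschitz, with `r` slightly below `1`, and takes values in a finite set
independent of `n`. The only obstruction to pasting the `q n` along the supports into one
`3`-Lipschitz function are the conflicts: points `x` of the `p`-th and `y` of the `m`-th support
with `3 * dist x y < |q p x - q m y|`. Call two conflicts of the same type if they agree in the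
values `q p x`, `q m y` and approximately in `dist x y`; there are finitely many types.

Fix a type and a free ultrafilter. Suppose that `x` in the `p`-th support has such a conflict both
with `y` in the `m`-th and with `y'` in the `n`-th support. For most `n`, and then most `p`, the
ultrafilter provides a point `x'` of the `n`-th support with `q n x' = q p x` whose distance to `y`
is about `dist x y`. The path `x', y, x, y'` has three steps of about this length, so
`|q n x' - q n y'| ≤ 3 * dist x y` because `q n` is `r`-Lipschitz; as `q n y' = q m y`, the points
`x` and `y` are not in conflict after all. Hence, for different `m`, the points of the `p`-th
support in conflict with the `m`-th one are essentially disjoint, and since `|μ p|` has bounded mass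
away from the base point, the mass of these points tends to zero. Along a sparse subsequence all
conflicts can therefore be neglected.
-/

open scoped NNReal Topology

section Pairing

variable {M : Type*}

/-- The evaluation `⟨μ, f⟩ = ∑ x, μ x * f x` of a finitely supported `μ` against a function,
bundled as a bilinear map with the function as its first argument. -/
noncomputable def pairing : (M → ℝ) →ₗ[ℝ] (M →₀ ℝ) →ₗ[ℝ] ℝ :=
  Finsupp.bilinearCombination ℝ ℝ

theorem pairing_le_sum_abs_mul {f : M → ℝ} {B : ℝ} (hf : ∀ x, |f x| ≤ B) (μ : M →₀ ℝ) :
    pairing f μ ≤ (∑ x ∈ μ.support with f x ≠ 0, |μ x|) * B := by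
  calc pairing f μ = ∑ x ∈ μ.support with f x ≠ 0, μ x * f x :=
        (Finset.sum_filter_of_ne fun _ _ => right_ne_zero_of_mul).symm
    _ ≤ ∑ x ∈ μ.support with f x ≠ 0, |μ x| * B := Finset.sum_le_sum fun x _ => by
        calc μ x * f x ≤ |μ x| * |f x| := (le_abs_self _).trans_eq (abs_mul _ _)
          _ ≤ |μ x| * B := by gcongr; exact hf x
    _ = (∑ x ∈ μ.support with f x ≠ 0, |μ x|) * B := (Finset.sum_mul _ _ _).symm

end Pairing

section FreeNorm

variable {M : Type*} [MetricSpace M] {z : M}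

theorem abs_le_mul_dist_of_eq_zero {K : ℝ≥0} {f : M → ℝ} (hz : f z = 0)
    (hf : LipschitzWith K f) (x : M) : |f x| ≤ K * dist x z := by
  simpa [Real.dist_eq, hz] using hf.dist_le_mul x z

theorem pairing_sub_le_sum_ne_mul [DecidableEq M] {D : ℝ} (hD : ∀ x y : M, dist x y ≤ D)
    {K L : ℝ≥0} {f g : M → ℝ} (hfz : f z = 0) (hgz : g z = 0) (hf : LipschitzWith K f)
    (hg : LipschitzWith L g) (μ : M →₀ ℝ) :
    pairing (f - g) μ ≤ (∑ x ∈ μ.support.erase z with f x ≠ g x, |μ x|) * ((K + L) * D) := by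
  have hz : (f - g) z = 0 := by simp [hfz, hgz]
  have hbound : ∀ x, |(f - g) x| ≤ (K + L) * D := fun x =>
    (abs_le_mul_dist_of_eq_zero hz (hf.sub hg) x).trans
      (by push_cast; gcongr; exact hD x z)
  have hsupport : {x ∈ μ.support | (f - g) x ≠ 0} = {x ∈ μ.support.erase z | f x ≠ g x} := by
    ext x
    simp only [Finset.mem_filter, Finset.mem_erase, Pi.sub_apply, sub_ne_zero]
    grind
  simpa only [hsupport] using pairing_le_sum_abs_mul hbound μ

theorem pairing_le_freeNorm (μ : M →₀ ℝ) {f : M → ℝ} (hz : f z = 0) (hf : LipschitzWith 1 f) :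
    pairing f μ ≤ freeNorm z μ := by
  refine le_csSup ⟨∑ x ∈ μ.support, |μ x| * dist x z, ?_⟩ ⟨f, hz, hf, rfl⟩
  rintro _ ⟨g, hgz, hg, rfl⟩
  refine Finset.sum_le_sum fun x _ => ?_
  calc μ x * g x ≤ |μ x| * |g x| := (le_abs_self _).trans_eq (abs_mul _ _)
    _ ≤ |μ x| * dist x z := by
        gcongr; simpa using abs_le_mul_dist_of_eq_zero hgz hg x

theorem exists_lt_pairing_of_lt_freeNorm {μ : M →₀ ℝ} {c : ℝ} (h : c < freeNorm z μ) :
    ∃ f : M → ℝ, f z = 0 ∧ LipschitzWith 1 f ∧ c < pairing f μ := by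
  obtain ⟨_, ⟨f, hz, hf, rfl⟩, hc⟩ :=
    exists_lt_of_lt_csSup (by exact ⟨_, 0, rfl, LipschitzWith.const' 0, rfl⟩) h
  exact ⟨f, hz, hf, hc⟩

theorem freeNorm_nonneg (z : M) (μ : M →₀ ℝ) : 0 ≤ freeNorm z μ := by
  simpa using pairing_le_freeNorm (z := z) μ (f := 0) rfl (LipschitzWith.const' 0)

theorem freeNorm_add_le (z : M) (μ ν : M →₀ ℝ) :
    freeNorm z (μ + ν) ≤ freeNorm z μ + freeNorm z ν := by
  refine le_of_forall_lt fun c hc => ?_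
  obtain ⟨f, hz, hf, hcf⟩ := exists_lt_pairing_of_lt_freeNorm hc
  calc c < pairing f μ + pairing f ν := by rwa [map_add] at hcf
    _ ≤ freeNorm z μ + freeNorm z ν :=
        add_le_add (pairing_le_freeNorm μ hz hf) (pairing_le_freeNorm ν hz hf)

theorem pairing_le_mul_freeNorm (μ : M →₀ ℝ) {K : ℝ≥0} {f : M → ℝ} (hz : f z = 0)
    (hf : LipschitzWith K f) : pairing f μ ≤ K * freeNorm z μ := by
  rcases eq_or_ne K 0 with rfl | hK
  · have hf0 : f = 0 := funext fun x => by
      simpa using abs_le_mul_dist_of_eq_zero hz hf x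
    simp [hf0]
  · have hscaled : LipschitzWith 1 ((K : ℝ)⁻¹ • f) := by
      refine LipschitzWith.of_dist_le_mul fun x y => ?_
      have hKpos : (0 : ℝ) < K := NNReal.coe_pos.2 (pos_iff_ne_zero.2 hK)
      rw [Pi.smul_apply, Pi.smul_apply, dist_smul₀, Real.norm_of_nonneg (by positivity),
        inv_mul_le_iff₀ hKpos]
      simpa using hf.dist_le_mul x y
    have h := pairing_le_freeNorm (z := z) μ (by simp [hz]) hscaled
    rwa [map_smul, LinearMap.smul_apply, smul_eq_mul,
      inv_mul_le_iff₀ (NNReal.coe_pos.2 (pos_iff_ne_zero.2 hK))] at h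

end FreeNorm

section UniformlyDiscrete

variable {M : Type*} [MetricSpace M] {θ : ℝ}

theorem lipschitzWith_of_dist_le_of_pairwise_le_dist {Y : Type*} [PseudoMetricSpace Y]
    (hsep : Pairwise fun x y : M => θ ≤ dist x y) {K : ℝ≥0} {f : M → Y}
    (hf : ∀ x y, dist (f x) (f y) ≤ K * θ) : LipschitzWith K f := by
  refine LipschitzWith.of_dist_le_mul fun x y => ?_
  rcases eq_or_ne x y with rfl | hxy
  · simp
  · exact (hf x y).trans (by gcongr; exact hsep hxy)

theorem pairwise_one_le_dist (h : ∀ x y : M, ∃ k : ℕ, dist x y = k) :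
    Pairwise fun x y : M => 1 ≤ dist x y := fun x y hxy => by
  obtain ⟨k, hk⟩ := h x y
  have hpos : (0 : ℝ) < k := hk ▸ dist_pos.2 hxy
  rw [hk]
  exact_mod_cast hpos

theorem mul_sum_abs_erase_le_freeNorm [DecidableEq M] (hθ : 0 ≤ θ)
    (hsep : Pairwise fun x y : M => θ ≤ dist x y) (z : M) (μ : M →₀ ℝ) :
    θ / 2 * ∑ x ∈ μ.support.erase z, |μ x| ≤ freeNorm z μ := by
  set f : M → ℝ := fun x => if x = z then 0 else θ / 2 * SignType.sign (μ x) with hfdef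
  have hfz : f z = 0 := if_pos rfl
  have hbound : ∀ x, |f x| ≤ θ / 2 := fun x => by
    have hθ2 : 0 ≤ θ / 2 := by positivity
    simp only [hfdef]
    split_ifs
    · simpa using hθ2
    · rcases lt_trichotomy (μ x) 0 with h | h | h <;> simp [h, abs_of_nonneg hθ2, hθ2]
  have hf : LipschitzWith 1 f :=
    lipschitzWith_of_dist_le_of_pairwise_le_dist hsep fun x y => by
      rw [Real.dist_eq, NNReal.coe_one, one_mul]
      linarith [abs_sub (f x) (f y), hbound x, hbound y]
  calc θ / 2 * ∑ x ∈ μ.support.erase z, |μ x|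
      = ∑ x ∈ μ.support.erase z, μ x * f x := by
        rw [Finset.mul_sum]
        refine Finset.sum_congr rfl fun x hx => ?_
        simp only [hfdef, if_neg (Finset.ne_of_mem_erase hx)]
        rw [← self_mul_sign (μ x)]; ring
    _ = pairing f μ := Finset.sum_erase _ (by rw [hfz, mul_zero])
    _ ≤ freeNorm z μ := pairing_le_freeNorm μ hfz hf

end UniformlyDiscrete

section Quantization

theorem exists_finset_forall_abs_sub_le {δ : ℝ} (hδ : 0 < δ) (R : ℝ) :
    ∃ (V : Finset ℝ) (φ : ℝ → ℝ), φ 0 = 0 ∧ (∀ t, |φ t - t| ≤ δ) ∧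
      ∀ t, |t| ≤ R → φ t ∈ V := by
  refine ⟨(Finset.Icc ⌊-R / δ⌋ ⌊R / δ⌋).image fun k : ℤ => δ * k,
    fun t => δ * ⌊t / δ⌋, by simp, fun t => ?_, fun t ht => ?_⟩
  · have hle : (⌊t / δ⌋ : ℝ) * δ ≤ t := (le_div_iff₀ hδ).1 (Int.floor_le _)
    have hlt : t < (⌊t / δ⌋ + 1) * δ := (div_lt_iff₀ hδ).1 (Int.lt_floor_add_one _)
    rw [abs_le]
    constructor <;> linarith
  · obtain ⟨hlo, hhi⟩ := abs_le.1 ht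
    exact Finset.mem_image_of_mem _ (Finset.mem_Icc.2
      ⟨Int.floor_mono (by gcongr), Int.floor_mono (by gcongr)⟩)

variable {M : Type*} [MetricSpace M] [BoundedSpace M] {θ : ℝ}

theorem exists_finset_forall_lipschitzWith_exists_quantized (hθ : 0 < θ)
    (hsep : Pairwise fun x y : M => θ ≤ dist x y) (z : M) (K : ℝ≥0) {η : ℝ≥0} (hη : 0 < η) :
    ∃ V : Finset ℝ, ∀ f : M → ℝ, f z = 0 → LipschitzWith K f →
      ∃ q : M → ℝ, q z = 0 ∧ LipschitzWith η (q - f) ∧ ∀ x, q x ∈ V := by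
  obtain ⟨D, hD⟩ := Metric.boundedSpace_iff.1 ‹BoundedSpace M›
  obtain ⟨V, φ, hφ0, hφ, hφV⟩ :=
    exists_finset_forall_abs_sub_le (δ := η * θ / 2) (by positivity) (K * D)
  refine ⟨V, fun f hfz hf => ⟨φ ∘ f, by simp [hfz, hφ0], ?_, fun x => hφV _ ?_⟩⟩
  · refine lipschitzWith_of_dist_le_of_pairwise_le_dist hsep fun x y => ?_
    calc dist ((φ ∘ f - f) x) ((φ ∘ f - f) y) ≤ |φ (f x) - f x| + |φ (f y) - f y| := abs_sub _ _
      _ ≤ η * θ := by linarith [hφ (f x), hφ (f y)]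
  · exact (abs_le_mul_dist_of_eq_zero hfz hf x).trans (by gcongr; exact hD x z)

theorem exists_finite_coloring_dist (hθ : 0 < θ)
    (hsep : Pairwise fun x y : M => θ ≤ dist x y) {η : ℝ} (hη0 : 0 < η) (hη1 : η < 1) :
    ∃ (V : Finset ℝ) (κ : M → M → V), ∀ ⦃x y x' y' : M⦄, κ x y = κ x' y' →
      (1 - η) * dist x y ≤ dist x' y' := by
  obtain ⟨D, hD⟩ := Metric.boundedSpace_iff.1 ‹BoundedSpace M›
  obtain ⟨V, φ, -, hφ, hφV⟩ :=
    exists_finset_forall_abs_sub_le (δ := η * θ / 2) (by positivity) D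
  refine ⟨V, fun x y => ⟨φ (dist x y), hφV _ (by simpa using hD x y)⟩, fun x y x' y' h => ?_⟩
  have hclose : dist x y ≤ dist x' y' + η * θ := by
    have h' : φ (dist x y) = φ (dist x' y') := congrArg Subtype.val h
    linarith [(abs_le.1 (hφ (dist x y))).1, (abs_le.1 (hφ (dist x' y'))).2]
  rcases eq_or_ne x y with rfl | hxy
  · simp
  rcases eq_or_ne x' y' with rfl | hxy'
  · rw [dist_self, zero_add] at hclose
    nlinarith [hsep hxy]
  · calc (1 - η) * dist x y ≤ (1 - η) * (dist x' y' + η * dist x' y') := by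
          have : 0 ≤ 1 - η := by linarith
          gcongr
          exact hclose.trans (by gcongr; exact hsep hxy')
      _ ≤ dist x' y' := by nlinarith [sq_nonneg η, dist_nonneg (x := x') (y := y')]

end Quantization

section Ultrafilter

variable {ι M : Type*}

theorem eventually_eventually_imp (U : Ultrafilter ι) (R : ι → Prop) :
    ∀ᶠ n in U, ∀ᶠ p in U, R p → R n := by
  by_cases h : ∀ᶠ n in U, R n
  · filter_upwards [h] with n hn
    exact Eventually.of_forall fun _ _ => hn
  · refine Eventually.of_forall fun n => ?_
    filter_upwards [Ultrafilter.eventually_not.2 h] with p hp hRp using absurd hRp hp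

theorem eventually_eventually_sum_lt_of_disjoint {U : Ultrafilter ι} {F : ι → Finset M}
    {X : ι → ι → Finset M} (hXF : ∀ m p, X m p ⊆ F p)
    (hdisj : ∀ m, ∀ᶠ n in U, ∀ᶠ p in U, Disjoint (X m p) (X n p))
    {a : ι → M → ℝ} (ha : ∀ p x, 0 ≤ a p x) {K : ℝ} (hK : ∀ p, ∑ x ∈ F p, a p x ≤ K)
    {ε : ℝ} (hε : 0 < ε) :
    ∀ᶠ m in U, ∀ᶠ p in U, ∑ x ∈ X m p, a p x < ε := by
  classical
  by_contra hcon
  have hlarge : ∀ᶠ m in U, ∀ᶠ p in U, ε ≤ ∑ x ∈ X m p, a p x := by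
    simpa only [← Ultrafilter.eventually_not, not_lt] using hcon
  obtain ⟨ν, hν, hνdisj⟩ := exists_seq_of_forall_finset_exists
    (fun m => ∀ᶠ p in U, ε ≤ ∑ x ∈ X m p, a p x)
    (fun m n => ∀ᶠ p in U, Disjoint (X m p) (X n p))
    fun s _ => (hlarge.and ((eventually_all_finset s).2 fun m _ => hdisj m)).exists
  obtain ⟨k, hk⟩ := exists_nat_gt (K / ε)
  have hall : ∀ᶠ p in U, ∀ i ∈ Finset.range k, (ε ≤ ∑ x ∈ X (ν i) p, a p x) ∧
      ∀ j ∈ Finset.range k, i < j → Disjoint (X (ν i) p) (X (ν j) p) := by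
    simp only [eventually_all_finset, eventually_and, eventually_imp_distrib_left]
    exact fun i _ => ⟨hν i, fun j _ hij => hνdisj i j hij⟩
  obtain ⟨p, hp⟩ := hall.exists
  have hpairwise : (Finset.range k : Set ℕ).PairwiseDisjoint fun i => X (ν i) p := by
    intro i hi j hj hij
    rcases hij.lt_or_gt with hlt | hgt
    · exact (hp i hi).2 j hj hlt
    · exact ((hp j hj).2 i hi hgt).symm
  have : k * ε ≤ K :=
    calc (k : ℝ) * ε = ∑ _i ∈ Finset.range k, ε := by simp
      _ ≤ ∑ i ∈ Finset.range k, ∑ x ∈ X (ν i) p, a p x :=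
          Finset.sum_le_sum fun i hi => (hp i hi).1
      _ = ∑ x ∈ (Finset.range k).biUnion fun i => X (ν i) p, a p x :=
          (Finset.sum_biUnion hpairwise).symm
      _ ≤ ∑ x ∈ F p, a p x := Finset.sum_le_sum_of_subset_of_nonneg
          (Finset.biUnion_subset.2 fun i _ => hXF _ _) fun x _ _ => ha p x
      _ ≤ K := hK p
  exact absurd hk (not_lt.2 ((le_div_iff₀ hε).2 this))

end Ultrafilter

theorem sum_biUnion_le_sum {ι M : Type*} [DecidableEq M] {a : M → ℝ} (ha : ∀ x, 0 ≤ a x)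
    (s : Finset ι) (X : ι → Finset M) :
    ∑ x ∈ s.biUnion X, a x ≤ ∑ i ∈ s, ∑ x ∈ X i, a x := by
  rw [← Finset.sup_eq_biUnion]
  refine Finset.apply_sup_le_sum (f := fun S : Finset M => ∑ x ∈ S, a x) Finset.sum_empty
    (fun {S T} => ?_) s
  rw [Finset.sup_eq_union, ← Finset.sum_union_inter]
  exact le_add_of_nonneg_right (Finset.sum_nonneg fun x _ => ha x)

section Conflict

variable {ι M Y C : Type*} [PseudoMetricSpace M] [PseudoMetricSpace Y]

open Classical in
/-- The points `x ∈ F p` at which the value `q p x` is incompatible with the values of `q m` on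
`F m` for a `3`-Lipschitz function; these are where pasting the functions `q i` fails. -/
noncomputable def conflictSet (q : ι → M → Y) (F : ι → Finset M) (m p : ι) : Finset M :=
  {x ∈ F p | ∃ y ∈ F m, 3 * dist x y < dist (q p x) (q m y)}

open Classical in
/-- The part of `conflictSet q F m p` coming from conflicts of type `t`: the two values of the
functions together with the colour of the pair of points, `κ` standing for a finite colouring of
pairs by their approximate distance. -/
noncomputable def conflictClass (q : ι → M → Y) (F : ι → Finset M) (κ : M → M → C)
    (t : Y × Y × C) (m p : ι) : Finset M :=
  {x ∈ F p | ∃ y ∈ F m, 3 * dist x y < dist (q p x) (q m y) ∧ (q p x, q m y, κ x y) = t}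

variable {q : ι → M → Y} {F : ι → Finset M} {κ : M → M → C}

theorem mem_conflictSet {m p : ι} {x : M} :
    x ∈ conflictSet q F m p ↔ x ∈ F p ∧ ∃ y ∈ F m, 3 * dist x y < dist (q p x) (q m y) := by
  classical exact Finset.mem_filter

theorem mem_conflictClass {t : Y × Y × C} {m p : ι} {x : M} :
    x ∈ conflictClass q F κ t m p ↔
      x ∈ F p ∧ ∃ y ∈ F m, 3 * dist x y < dist (q p x) (q m y) ∧ (q p x, q m y, κ x y) = t := by
  classical exact Finset.mem_filter

theorem conflictSet_subset_biUnion_conflictClass [DecidableEq M] [Fintype C] {V : Finset Y}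
    (hV : ∀ n x, q n x ∈ V) (m p : ι) :
    conflictSet q F m p ⊆
      (V ×ˢ V ×ˢ Finset.univ).biUnion fun t => conflictClass q F κ t m p := by
  intro x hx
  obtain ⟨hxp, y, hym, hlt⟩ := mem_conflictSet.1 hx
  exact Finset.mem_biUnion.2 ⟨(q p x, q m y, κ x y), by simp [hV],
    mem_conflictClass.2 ⟨hxp, y, hym, hlt, rfl⟩⟩

theorem eventually_eventually_disjoint_conflictClass (U : Ultrafilter ι) {r : ℝ≥0}
    (hq : ∀ n, LipschitzWith r (q n))
    (hκ : ∀ ⦃x y x' y' : M⦄, κ x y = κ x' y' → r * dist x y ≤ dist x' y')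
    (t : Y × Y × C) (m : ι) :
    ∀ᶠ n in U, ∀ᶠ p in U, Disjoint (conflictClass q F κ t m p) (conflictClass q F κ t n p) := by
  obtain ⟨u, v, d⟩ := t
  have hreflect : ∀ᶠ n in U, ∀ y ∈ F m, ∀ᶠ p in U,
      (∃ x ∈ F p, q p x = u ∧ κ x y = d) → ∃ x ∈ F n, q n x = u ∧ κ x y = d :=
    (eventually_all_finset _).2 fun y _ => eventually_eventually_imp U _
  filter_upwards [hreflect] with n hn
  filter_upwards [(eventually_all_finset _).2 hn] with p hp
  refine Finset.disjoint_left.2 fun x hxm hxn => ?_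
  obtain ⟨hxp, y, hy, hlt, hxy⟩ := mem_conflictClass.1 hxm
  obtain ⟨-, y', -, -, hxy'⟩ := mem_conflictClass.1 hxn
  simp only [Prod.mk.injEq] at hxy hxy'
  obtain ⟨hqx, hqy, hκxy⟩ := hxy
  obtain ⟨-, hqy', hκxy'⟩ := hxy'
  obtain ⟨x', -, hqx', hκx'y⟩ := hp y hy ⟨x, hxp, hqx, hκxy⟩
  refine hlt.not_ge ?_
  calc dist (q p x) (q m y) = dist (q n x') (q n y') := by rw [hqx, hqy, hqx', hqy']
    _ ≤ r * dist x' y' := (hq n).dist_le_mul x' y'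
    _ ≤ r * (dist x' y + dist x y + dist x y') := by
        gcongr
        simpa only [dist_comm y x] using dist_triangle4 x' y x y'
    _ = r * dist x' y + r * dist x y + r * dist x y' := by ring
    _ ≤ dist x y + dist x y + dist x y := by
        gcongr
        · exact hκ (hκx'y.trans hκxy.symm)
        · exact hκ rfl
        · exact hκ (hκxy'.trans hκxy.symm)
    _ = 3 * dist x y := by ring

theorem eventually_eventually_sum_conflictSet_lt [Finite C] (U : Ultrafilter ι) {r : ℝ≥0}
    (hq : ∀ n, LipschitzWith r (q n)) {V : Finset Y} (hV : ∀ n x, q n x ∈ V)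
    (hκ : ∀ ⦃x y x' y' : M⦄, κ x y = κ x' y' → r * dist x y ≤ dist x' y')
    {a : ι → M → ℝ} (ha : ∀ p x, 0 ≤ a p x) {K : ℝ} (hK : ∀ p, ∑ x ∈ F p, a p x ≤ K)
    {ε : ℝ} (hε : 0 < ε) :
    ∀ᶠ m in U, ∀ᶠ p in U, ∑ x ∈ conflictSet q F m p, a p x < ε := by
  classical
  cases nonempty_fintype C
  set T : Finset (Y × Y × C) := V ×ˢ V ×ˢ Finset.univ
  have hclass : ∀ᶠ m in U, ∀ t ∈ T, ∀ᶠ p in U,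
      ∑ x ∈ conflictClass q F κ t m p, a p x < ε / (T.card + 1) :=
    (eventually_all_finset T).2 fun t _ => eventually_eventually_sum_lt_of_disjoint
      (fun _ _ => Finset.filter_subset _ _)
      (eventually_eventually_disjoint_conflictClass U hq hκ t) ha hK (by positivity)
  filter_upwards [hclass] with m hm
  filter_upwards [(eventually_all_finset T).2 hm] with p hp
  calc ∑ x ∈ conflictSet q F m p, a p x
      ≤ ∑ x ∈ T.biUnion fun t => conflictClass q F κ t m p, a p x :=
        Finset.sum_le_sum_of_subset_of_nonneg
          (conflictSet_subset_biUnion_conflictClass hV m p) fun x _ _ => ha p x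
    _ ≤ ∑ t ∈ T, ∑ x ∈ conflictClass q F κ t m p, a p x := sum_biUnion_le_sum (ha p) _ _
    _ ≤ ∑ _t ∈ T, ε / (T.card + 1) := Finset.sum_le_sum fun t ht => (hp t ht).le
    _ = ε * (T.card / (T.card + 1)) := by rw [Finset.sum_const, nsmul_eq_mul]; ring
    _ < ε := mul_lt_of_lt_one_right hε ((div_lt_one (by positivity)).2 (lt_add_one _))

end Conflict

section Pasting

theorem exists_strictMono_sum_le {l : Filter ℕ} [l.NeBot] (hl : l ≤ atTop) {w : ℕ → ℕ → ℝ}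
    (hw : ∀ ε > 0, ∀ᶠ m in l, ∀ᶠ p in l, w m p < ε) {η : ℝ} (hη : 0 < η) :
    ∃ ν : ℕ → ℕ, StrictMono ν ∧ ∀ j, ∑ i ∈ Finset.range j, w (ν i) (ν j) ≤ η := by
  obtain ⟨φ, -, hφ⟩ := exists_seq_of_forall_finset_exists
    (fun t : ℕ × ℕ => ∀ᶠ p in l, w t.2 p < η / 2 / 2 ^ t.1)
    (fun t t' => t.1 < t'.1 ∧ t.2 < t'.2 ∧ w t.2 t'.2 < η / 2 / 2 ^ t.1) fun s hs => by
      obtain ⟨k, hk⟩ := ((eventually_all_finset s).2 fun t _ => eventually_gt_atTop t.1).exists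
      have hlt : ∀ᶠ n in l, ∀ t ∈ s, t.2 < n :=
        (eventually_all_finset s).2 fun t _ => hl (eventually_gt_atTop t.2)
      obtain ⟨n, hn, hsn, hwn⟩ := ((hw (η / 2 / 2 ^ k) (by positivity)).and
        (hlt.and ((eventually_all_finset s).2 hs))).exists
      exact ⟨(k, n), hn, fun t ht => ⟨hk t ht, hsn t ht, hwn t ht⟩⟩
  have hlevel : StrictMono fun i => (φ i).1 := fun i j hij => (hφ i j hij).1
  refine ⟨fun i => (φ i).2, fun i j hij => (hφ i j hij).2.1, fun j => ?_⟩
  calc ∑ i ∈ Finset.range j, w (φ i).2 (φ j).2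
      ≤ ∑ i ∈ Finset.range j, η / 2 / 2 ^ i := Finset.sum_le_sum fun i hi => by
        refine (hφ i j (Finset.mem_range.1 hi)).2.2.le.trans ?_
        gcongr
        · norm_num
        · exact hlevel.le_apply
    _ ≤ ∑' i : ℕ, η / 2 / 2 ^ i :=
        (summable_geometric_two' η).sum_le_tsum _ fun i _ => by positivity
    _ = η := tsum_geometric_two' η

variable {ι M : Type*} [PseudoMetricSpace M]

theorem exists_lipschitzWith_eqOn_of_dist_le [Nonempty ι] {K : ℝ≥0} {q : ι → M → ℝ}
    {A : ι → Set M}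
    (h : ∀ i j, ∀ x ∈ A i, ∀ y ∈ A j, dist (q i x) (q j y) ≤ K * dist x y) :
    ∃ g : M → ℝ, LipschitzWith K g ∧ ∀ i, Set.EqOn g (q i) (A i) := by
  choose! idx hidx using fun (x : M) (hx : x ∈ ⋃ i, A i) => Set.mem_iUnion.1 hx
  obtain ⟨g, hg, heq⟩ := LipschitzOnWith.extend_real (f := fun x => q (idx x) x) (K := K)
    (LipschitzOnWith.of_dist_le_mul fun x hx y hy => h _ _ x (hidx x hx) y (hidx y hy))
  refine ⟨g, hg, fun i x hx => ?_⟩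
  have hxU : x ∈ ⋃ i, A i := Set.mem_iUnion_of_mem i hx
  have hdist := h (idx x) i x (hidx x hxU) x hx
  rw [dist_self, mul_zero] at hdist
  exact (heq hxU).symm.trans (dist_le_zero.1 hdist)

theorem exists_lipschitzWith_three_eq_of_notMem_conflictSet [LinearOrder ι] [Nonempty ι] {z : M}
    {q : ι → M → ℝ} (hz : ∀ i, q i z = 0) (hq : ∀ i, LipschitzWith 3 (q i)) (F : ι → Finset M) :
    ∃ g : M → ℝ, g z = 0 ∧ LipschitzWith 3 g ∧
      ∀ i, ∀ x ∈ F i, (∀ j < i, x ∉ conflictSet q F j i) → g x = q i x := by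
  set A : ι → Set M := fun i => insert z {x | x ∈ F i ∧ ∀ j < i, x ∉ conflictSet q F j i}
  have hlt : ∀ i j, j < i → ∀ x ∈ A i, ∀ y ∈ A j,
      dist (q i x) (q j y) ≤ (3 : ℝ≥0) * dist x y := by
    rintro i j hji x (rfl | ⟨hx, hxA⟩) y hy
    · simpa only [hz] using (hq j).dist_le_mul x y
    rcases hy with rfl | ⟨hy, -⟩
    · simpa only [hz] using (hq i).dist_le_mul x y
    · by_contra! hcon
      exact hxA j hji (mem_conflictSet.2 ⟨hx, y, hy, by simpa using hcon⟩)
  obtain ⟨g, hg, hgA⟩ := exists_lipschitzWith_eqOn_of_dist_le (K := 3) (q := q) (A := A)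
    fun i j x hx y hy => by
      rcases lt_trichotomy i j with hij | rfl | hji
      · rw [dist_comm, dist_comm x]
        exact hlt j i hij y hy x hx
      · exact (hq i).dist_le_mul x y
      · exact hlt i j hji x hx y hy
  obtain ⟨i₀⟩ := ‹Nonempty ι›
  exact ⟨g, (hgA i₀ (Set.mem_insert z _)).trans (hz i₀), hg,
    fun i x hx hxA => hgA i (Or.inr ⟨hx, hxA⟩)⟩

theorem exists_lipschitzWith_three_sum_ne_le {C : Type*} [Finite C] {κ : M → M → C} {r : ℝ≥0}
    (hr : r ≤ 1) (hκ : ∀ ⦃x y x' y' : M⦄, κ x y = κ x' y' → r * dist x y ≤ dist x' y')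
    {z : M} {q : ℕ → M → ℝ} (hz : ∀ n, q n z = 0) (hq : ∀ n, LipschitzWith r (q n))
    {V : Finset ℝ} (hV : ∀ n x, q n x ∈ V) {F : ℕ → Finset M}
    {a : ℕ → M → ℝ} (ha : ∀ n x, 0 ≤ a n x) {K : ℝ} (hK : ∀ n, ∑ x ∈ F n, a n x ≤ K)
    {η : ℝ} (hη : 0 < η) :
    ∃ (g : M → ℝ) (ν : ℕ → ℕ), g z = 0 ∧ LipschitzWith 3 g ∧ StrictMono ν ∧
      ∀ i, ∑ x ∈ F (ν i) with q (ν i) x ≠ g x, a (ν i) x ≤ η := by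
  classical
  obtain ⟨ν, hν, hsum⟩ := exists_strictMono_sum_le Nat.hyperfilter_le_atTop
    (fun ε hε => eventually_eventually_sum_conflictSet_lt (hyperfilter ℕ) hq hV hκ ha hK hε) hη
  obtain ⟨g, hgz, hg, hgq⟩ := exists_lipschitzWith_three_eq_of_notMem_conflictSet
    (q := q ∘ ν) (fun i => hz (ν i))
    (fun i => (hq (ν i)).weaken (hr.trans (by norm_num))) (F ∘ ν)
  refine ⟨g, ν, hgz, hg, hν, fun i => ?_⟩
  have hsub : {x ∈ F (ν i) | q (ν i) x ≠ g x} ⊆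
      (Finset.range i).biUnion fun j => conflictSet q F (ν j) (ν i) := fun x hx => by
    obtain ⟨hxF, hne⟩ := Finset.mem_filter.1 hx
    by_contra hcon
    refine hne (hgq i x hxF fun j hj hxj => hcon ?_).symm
    exact Finset.mem_biUnion.2 ⟨j, Finset.mem_range.2 hj, hxj⟩
  calc ∑ x ∈ F (ν i) with q (ν i) x ≠ g x, a (ν i) x
      ≤ ∑ x ∈ (Finset.range i).biUnion fun j => conflictSet q F (ν j) (ν i), a (ν i) x :=
        Finset.sum_le_sum_of_subset_of_nonneg hsub fun x _ _ => ha _ x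
    _ ≤ ∑ j ∈ Finset.range i, ∑ x ∈ conflictSet q F (ν j) (ν i), a (ν i) x :=
        sum_biUnion_le_sum (ha _) _ _
    _ ≤ η := hsum i

end Pasting

section Main

theorem exists_nnreal_lt_sub_of_lt {c c' : ℝ} (hcc' : c < c') (B : ℝ) :
    ∃ η s : ℝ≥0, 0 < η ∧ s + 2 * η = 1 ∧ c < s * c' - η * B := by
  have hlim : ContinuousAt (fun t : ℝ => (1 - 2 * t) * c' - t * B) 0 := by fun_prop
  have hlt : ∀ᶠ t in 𝓝 (0 : ℝ), c < (1 - 2 * t) * c' - t * B :=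
    hlim.eventually_const_lt (by simpa using hcc')
  obtain ⟨η, ⟨hη, hη0⟩, hηhalf⟩ := (((hlt.filter_mono nhdsWithin_le_nhds).and
    (self_mem_nhdsWithin (s := Set.Ioi (0 : ℝ)))).and (nhdsWithin_le_nhds
      (Iio_mem_nhds (one_half_pos (α := ℝ))))).exists
  lift η to ℝ≥0 using le_of_lt hη0
  have hηhalf' : (η : ℝ) < 1 / 2 := hηhalf
  have hs : 0 ≤ 1 - 2 * (η : ℝ) := by linarith only [hηhalf']
  exact ⟨η, ⟨1 - 2 * η, hs⟩, hη0, NNReal.eq (sub_add_cancel (1 : ℝ) (2 * η)), hη⟩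

variable {M : Type*} [MetricSpace M] [BoundedSpace M] {θ : ℝ}

theorem exists_quantized_almost_norming (hθ : 0 < θ)
    (hsep : Pairwise fun x y : M => θ ≤ dist x y) (z : M) {η : ℝ≥0} (hη : 0 < η) (s : ℝ≥0)
    (c : ℝ) :
    ∃ V : Finset ℝ, ∀ μ : M →₀ ℝ, c < freeNorm z μ → ∃ q : M → ℝ,
      q z = 0 ∧ LipschitzWith (s + η) q ∧ (∀ x, q x ∈ V) ∧
        s * c - η * freeNorm z μ ≤ pairing q μ := by
  obtain ⟨V, hV⟩ := exists_finset_forall_lipschitzWith_exists_quantized hθ hsep z s hη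
  refine ⟨V, fun μ hμ => ?_⟩
  obtain ⟨f, hfz, hf, hfμ⟩ := exists_lt_pairing_of_lt_freeNorm hμ
  have hsf : LipschitzWith s ((s : ℝ) • f) := LipschitzWith.of_dist_le_mul fun x y => by
    rw [Pi.smul_apply, Pi.smul_apply, dist_smul₀, NNReal.norm_eq]
    gcongr
    simpa using hf.dist_le_mul x y
  obtain ⟨q, hqz, hqf, hqV⟩ := hV ((s : ℝ) • f) (by simp [hfz]) hsf
  refine ⟨q, hqz, by simpa using hsf.add hqf, hqV, ?_⟩
  have herr : pairing ((s : ℝ) • f - q) μ ≤ η * freeNorm z μ :=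
    pairing_le_mul_freeNorm μ (by simp [hfz, hqz]) (by simpa using hqf.neg)
  have hsc : (s : ℝ) * c ≤ s * pairing f μ := by gcongr
  rw [map_sub, map_smul, LinearMap.sub_apply, LinearMap.smul_apply, smul_eq_mul] at herr
  linarith

theorem exists_three_lipschitz_frequently_lt_pairing (hθ : 0 < θ)
    (hsep : Pairwise fun x y : M => θ ≤ dist x y) (z : M) {μ : ℕ → M →₀ ℝ} {c c' C : ℝ}
    (hcc' : c < c') (hlow : ∀ n, c' < freeNorm z (μ n)) (hup : ∀ n, freeNorm z (μ n) ≤ C) :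
    ∃ g : M → ℝ, g z = 0 ∧ LipschitzWith 3 g ∧ ∃ᶠ n in atTop, c < pairing g (μ n) := by
  classical
  obtain ⟨D, hD⟩ := Metric.boundedSpace_iff.1 ‹BoundedSpace M›
  obtain ⟨η, s, hη, hsη, hc⟩ := exists_nnreal_lt_sub_of_lt hcc' (C + 4 * D)
  have hsη' : (s + 2 * η : ℝ) = 1 := by exact_mod_cast hsη
  have hr : ((s + η : ℝ≥0) : ℝ) = 1 - η := by push_cast; linarith only [hsη']
  have hr1 : s + η ≤ 1 := NNReal.coe_le_coe.1 (by rw [hr]; simp)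
  have hη1 : (η : ℝ) < 1 := by
    linarith only [hsη', s.coe_nonneg, NNReal.coe_pos.2 hη]
  obtain ⟨V, hV⟩ := exists_quantized_almost_norming hθ hsep z hη s c'
  choose q hqz hq hqV hqμ using fun n => hV (μ n) (hlow n)
  obtain ⟨W, κ, hκ⟩ := exists_finite_coloring_dist hθ hsep (NNReal.coe_pos.2 hη) hη1
  have hmass : ∀ n, ∑ x ∈ (μ n).support.erase z, |μ n x| ≤ C / (θ / 2) := fun n =>
    (le_div_iff₀' (half_pos hθ)).2 ((mul_sum_abs_erase_le_freeNorm hθ.le hsep z _).trans (hup n))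
  obtain ⟨g, ν, hgz, hg, hν, hgq⟩ := exists_lipschitzWith_three_sum_ne_le hr1
    (by rwa [hr]) hqz hq hqV (fun _ _ => abs_nonneg _) hmass (NNReal.coe_pos.2 hη)
  refine ⟨g, hgz, hg, hν.tendsto_atTop.frequently (Frequently.of_forall fun i => ?_)⟩
  have hD0 : 0 ≤ D := dist_nonneg.trans (hD z z)
  have herr : pairing (q (ν i)) (μ (ν i)) - pairing g (μ (ν i)) ≤ η * (4 * D) :=
    calc pairing (q (ν i)) (μ (ν i)) - pairing g (μ (ν i))
        = pairing (q (ν i) - g) (μ (ν i)) := by rw [map_sub, LinearMap.sub_apply]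
      _ ≤ _ := pairing_sub_le_sum_ne_mul hD (hqz _) hgz ((hq _).weaken hr1) hg _
      _ ≤ η * (4 * D) := by
          rw [show ((1 : ℝ≥0) + (3 : ℝ≥0) : ℝ) = 4 by norm_num]
          gcongr
          exact hgq i
  calc c < s * c' - η * (C + 4 * D) := hc
    _ = s * c' - η * C - η * (4 * D) := by ring
    _ ≤ s * c' - η * freeNorm z (μ (ν i)) - η * (4 * D) := by gcongr; exact hup _
    _ ≤ pairing g (μ (ν i)) := by linarith [hqμ (ν i)]

end Main

theorem exists_three_lipschitz_of_disjoint_supports_general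
    {M : Type*} [MetricSpace M] [BoundedSpace M] {θ : ℝ} (hθ : 0 < θ)
    (hsep : Pairwise fun x y : M => θ ≤ dist x y) (z : M) {μ : ℕ → M →₀ ℝ}
    (hbdd : IsBoundedUnder (· ≤ ·) atTop fun n => freeNorm z (μ n)) {c : ℝ}
    (hlim : c < limsup (fun n => freeNorm z (μ n)) atTop) :
    ∃ g : M → ℝ, g z = 0 ∧ LipschitzWith 3 g ∧
      c < limsup (fun n => ∑ x ∈ (μ n).support, μ n x * g x) atTop := by
  obtain ⟨b, hcb, hb⟩ := exists_between hlim
  obtain ⟨c', hbc', hc'⟩ := exists_between hb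
  obtain ⟨C, hC⟩ := hbdd
  have hfreq : ∃ᶠ n in atTop, c' < freeNorm z (μ n) := frequently_lt_of_lt_limsup
    (isCoboundedUnder_le_of_le _ fun n => freeNorm_nonneg z (μ n)) hc'
  obtain ⟨φ, hφ, hφμ⟩ :=
    extraction_of_frequently_atTop (hfreq.and_eventually (eventually_map.1 hC))
  obtain ⟨g, hgz, hg, hgμ⟩ := exists_three_lipschitz_frequently_lt_pairing hθ hsep z
    (μ := μ ∘ φ) hbc' (fun n => (hφμ n).1) fun n => (hφμ n).2
  refine ⟨g, hgz, hg, hcb.trans_le (le_limsup_of_frequently_le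
    (hφ.tendsto_atTop.frequently (hgμ.mono fun n => le_of_lt)) ⟨3 * C, eventually_map.2 ?_⟩)⟩
  filter_upwards [eventually_map.1 hC] with n hn
  exact (pairing_le_mul_freeNorm (μ n) hgz hg).trans (mul_le_mul_of_nonneg_left hn zero_le_three)

/-- Key lemma: for a metric taking only the values `0, 1, …, N` and a bounded sequence
`(γ_n)` with pairwise disjoint finite supports such that `limsup ‖γ_0 + γ_n‖ > c > 0`,
there is a `3`-Lipschitz function `g` vanishing at the base point with
`limsup ⟨γ_0 + γ_n, g⟩ > c`. -/
theorem exists_three_lipschitz_of_disjoint_supports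
    {M : Type*} [MetricSpace M] (z : M) (N : ℕ)
    (hint : ∀ x y : M, ∃ k : ℕ, k ≤ N ∧ dist x y = k)
    (F : ℕ → Finset M) (hF : ∀ m n : ℕ, m ≠ n → Disjoint (F m) (F n))
    (γ : ℕ → M →₀ ℝ) (hsupp : ∀ n, (γ n).support ⊆ F n)
    (hbdd : ∃ C : ℝ, ∀ n, freeNorm z (γ n) ≤ C)
    (c : ℝ) (hc : 0 < c)
    (hlim : c < limsup (fun n => freeNorm z (γ 0 + γ n)) atTop) :
    ∃ g : M → ℝ, g z = 0 ∧ LipschitzWith 3 g ∧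
      c < limsup
        (fun n => ∑ x ∈ (γ 0 + γ n).support, (γ 0 + γ n) x * g x) atTop := by
  have : BoundedSpace M := Metric.boundedSpace_iff.2
    ⟨N, fun x y => (hint x y).elim fun k hk => hk.2.trans_le (mod_cast hk.1)⟩
  obtain ⟨C, hC⟩ := hbdd
  exact exists_three_lipschitz_of_disjoint_supports_general one_pos
    (pairwise_one_le_dist fun x y => (hint x y).imp fun _ => And.right) z
    (isBoundedUnder_of ⟨C + C, fun n =>
      (freeNorm_add_le z _ _).trans (add_le_add (hC 0) (hC n))⟩) hlim
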